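/- G is of α-central type — i.e. any two irreducible projective α-representations of G on nonzero finite-dimensional complex vector spaces are linearly equivalent — if and only if s = t, r i = 1 for every i : Fin t, and c.rank = t. -/

import Mathlib

/-- The bilinear 2-cocycle `α (m,k) (m',k') = ξ ^ (∑ i ∑ j, c i j * πᵢ (m' i) * k j)`
on `G = (Π i, ZMod (p ^ r i)) × (Fin s → ZMod p)`, where `πᵢ : ZMod (p ^ r i) →+* ZMod p`
is the natural projection. -/
noncomputable def bilinAlpha (p : ℕ) {t s : ℕ} (r : Fin t → ℕ) (hr : ∀ i, 1 ≤ r i)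
    (c : Matrix (Fin t) (Fin s) (ZMod p)) (ξ : ℂˣ)
    (g h : (∀ i : Fin t, ZMod (p ^ r i)) × (Fin s → ZMod p)) : ℂˣ :=
  ξ ^ (∑ i, ∑ j, c i j *
      ZMod.castHom (dvd_pow_self p (Nat.one_le_iff_ne_zero.mp (hr i))) (ZMod p) (h.1 i) *
      g.2 j).val

/-!
Each `ρ h` permutes the operators `ρ g` up to scalars by conjugation: `ρ g` is an eigenvector whose
eigenvalue, as a function of `h`, is the character `h ↦ α h g / α g h`. If `α` is nondegenerate,
distinct `g` give distinct characters, so the `ρ g` are linearly independent. The average over `G`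
of a suitable rank one map `V₁ → V₂` is then a nonzero intertwiner, an isomorphism by Schur's lemma.
Conversely, if `α x h = α h x` for all `h`, then in an irreducible representation `ρ x` is a scalar,
so that `ρ` is not equivalent to its twist by a character which is nontrivial at `x`.

For `α (m, k) (m', k') = ξ ^ ⟨π m', c k⟩` the elements `x` with this symmetry are the `(m, k)` with
`c k = 0` and `cᵀ (π m) = 0`; they all vanish exactly when `π` is injective and `c` is square and
invertible.
-/

open Function Module
open scoped Matrix Ring

universe u v

section Cocycle

variable {G M : Type*} [AddCommGroup G] [CommGroup M] {α : G → G → M}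

/-- Normalized 2-cocycles on `G` with values in `M`, for the trivial action of `G`. -/
structure IsNormalizedTwoCocycle (α : G → G → M) : Prop where
  zero_left : ∀ g, α 0 g = 1
  cocycle : ∀ g h k, α g h * α (g + h) k = α h k * α g (h + k)

theorem isNormalizedTwoCocycle_of_map_add (hleft : ∀ g g' h, α (g + g') h = α g h * α g' h)
    (hright : ∀ g h h', α g (h + h') = α g h * α g h') : IsNormalizedTwoCocycle α where
  zero_left g := by simpa using hleft 0 0 g
  cocycle g h k := by
    rw [hleft, hright]
    ac_rfl

/-- Nondegeneracy of a 2-cocycle on an abelian group: only `0` is `α`-regular. -/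
def IsNondegenerateCocycle {G M : Type*} [Zero G] (α : G → G → M) : Prop :=
  ∀ x, (∀ h, α x h = α h x) → x = 0

/-- The alternating pairing of `G` measuring the failure of `α` to be symmetric. It relates the
products `ρ g * ρ h` and `ρ h * ρ g` in projective `α`-representations. -/
def commutatorPairing {G : Type*} (α : G → G → M) (g h : G) : M := α g h / α h g

theorem inv_commutatorPairing {G : Type*} (α : G → G → M) (g h : G) :
    (commutatorPairing α g h)⁻¹ = commutatorPairing α h g :=
  inv_div _ _

theorem IsNormalizedTwoCocycle.commutatorPairing_add_left (hα : IsNormalizedTwoCocycle α)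
    (g h k : G) :
    commutatorPairing α (g + h) k = commutatorPairing α g k * commutatorPairing α h k := by
  have hghk := hα.cocycle g h k
  have hgkh := hα.cocycle g k h
  have hkgh := hα.cocycle k g h
  rw [add_comm k h] at hgkh
  rw [add_comm k g] at hkgh
  rw [commutatorPairing, commutatorPairing, commutatorPairing, div_mul_div_comm,
    div_eq_div_iff_mul_eq_mul]
  apply mul_left_cancel (a := α g h)
  calc α g h * (α (g + h) k * (α k g * α k h))
      = α g h * α (g + h) k * (α k g * α k h) := (mul_assoc _ _ _).symm
    _ = α h k * α k g * (α k h * α g (h + k)) := by rw [hghk]; ac_rfl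
    _ = α g k * α h k * (α k g * α (g + k) h) := by rw [← hgkh]; ac_rfl
    _ = α g h * (α g k * α h k * α k (g + h)) := by rw [hkgh]; ac_rfl

/-- The character `g ↦ α g h / α h g` of `G`, for a fixed `h`. -/
def commutatorChar (hα : IsNormalizedTwoCocycle α) (h : G) : Multiplicative G →* M :=
  MonoidHom.mk' (fun g => commutatorPairing α g.toAdd h)
    fun g g' => hα.commutatorPairing_add_left g.toAdd g'.toAdd h

theorem commutatorChar_injective (hα : IsNormalizedTwoCocycle α)
    (hnd : IsNondegenerateCocycle α) : Injective (commutatorChar hα) := by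
  intro g g' hgg'
  refine sub_eq_zero.mp (hnd _ fun h => div_eq_one.mp ?_)
  have hpair : commutatorPairing α g h = commutatorPairing α g' h := by
    rw [← inv_commutatorPairing α h g, ← inv_commutatorPairing α h g']
    exact congrArg Inv.inv (DFunLike.congr_fun hgg' (.ofAdd h))
  have hadd := hα.commutatorPairing_add_left (g - g') g' h
  rwa [sub_add_cancel, hpair, right_eq_mul] at hadd

end Cocycle

section Family

variable {ι R V V₁ V₂ : Type*} [Ring R] [AddCommGroup V] [Module R V]
  [AddCommGroup V₁] [Module R V₁] [AddCommGroup V₂] [Module R V₂]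
  {ρ : ι → End R V} {ρ₁ : ι → End R V₁} {ρ₂ : ι → End R V₂}

/-- Irreducibility of a family of endomorphisms: the space is nonzero and has no common invariant
subspaces other than the two trivial ones. -/
structure IsIrreducibleFamily (ρ : ι → End R V) : Prop where
  nontrivial : Nontrivial V
  eq_bot_or_eq_top : ∀ W : Submodule R V, (∀ i, W ∈ (ρ i).invtSubmodule) → W = ⊥ ∨ W = ⊤

/-- Linear equivalence of two families of endomorphisms: simultaneous conjugacy. -/
def LinearlyEquivalent (ρ₁ : ι → End R V₁) (ρ₂ : ι → End R V₂) : Prop :=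
  ∃ T : V₁ ≃ₗ[R] V₂, ∀ i v, T (ρ₁ i v) = ρ₂ i (T v)

theorem IsIrreducibleFamily.bijective_of_intertwining (h₁ : IsIrreducibleFamily ρ₁)
    (h₂ : IsIrreducibleFamily ρ₂) {T : V₁ →ₗ[R] V₂} (hT : ∀ i v, T (ρ₁ i v) = ρ₂ i (T v))
    (hT₀ : T ≠ 0) : Bijective T := by
  have hker : ∀ i, T.ker ∈ (ρ₁ i).invtSubmodule := fun i v hv => by
    simpa [hT] using congrArg (ρ₂ i) (LinearMap.mem_ker.mp hv)
  have hrange : ∀ i, T.range ∈ (ρ₂ i).invtSubmodule := by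
    rintro i _ ⟨v, rfl⟩
    exact ⟨ρ₁ i v, hT i v⟩
  constructor
  · exact LinearMap.ker_eq_bot.mp ((h₁.eq_bot_or_eq_top _ hker).resolve_right
      (mt LinearMap.ker_eq_top.mp hT₀))
  · exact LinearMap.range_eq_top.mp ((h₂.eq_bot_or_eq_top _ hrange).resolve_left
      (mt LinearMap.range_eq_bot.mp hT₀))

theorem exists_isIrreducibleFamily_restrict [IsArtinian R V] [Nontrivial V]
    (ρ : ι → End R V) :
    ∃ (W : Submodule R V) (hW : ∀ i, W ∈ (ρ i).invtSubmodule),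
      IsIrreducibleFamily fun i => (ρ i).restrict (hW i) := by
  obtain ⟨W, ⟨hW₀, hW⟩, hmin⟩ := exists_minimal_of_wellFoundedLT
    (fun W : Submodule R V => W ≠ ⊥ ∧ ∀ i, W ∈ (ρ i).invtSubmodule)
    ⟨⊤, top_ne_bot, fun i => End.invtSubmodule.top_mem (ρ i)⟩
  refine ⟨W, hW, Submodule.nontrivial_iff_ne_bot.mpr hW₀, fun U hU => or_iff_not_imp_left.mpr ?_⟩
  intro hU₀
  have hle : W ≤ U.map W.subtype := by
    refine hmin ⟨?_, fun i => ?_⟩ (Submodule.map_subtype_le W U)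
    · rwa [Ne, ← Submodule.map_bot W.subtype,
        (Submodule.map_injective_of_injective W.injective_subtype).eq_iff]
    · exact End.invtSubmodule.map_subtype_mem_of_mem_invtSubmodule (ρ i) (hW i) (hU i)
  exact top_le_iff.mp ((Submodule.map_le_map_iff_of_injective W.injective_subtype _ _).mp
    ((Submodule.map_subtype_top W).trans_le hle))

theorem IsIrreducibleFamily.exists_eq_smul_one {K : Type*} [Field K] [IsAlgClosed K] [Module K V]
    [FiniteDimensional K V] {ρ : ι → End K V} (hρ : IsIrreducibleFamily ρ) {f : End K V}
    (hf : ∀ i, Commute f (ρ i)) : ∃ μ : K, f = μ • 1 := by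
  have := hρ.nontrivial
  obtain ⟨μ, hμ⟩ := End.exists_eigenvalue f
  have hinv : ∀ i, f.eigenspace μ ∈ (ρ i).invtSubmodule := fun i =>
    End.mapsTo_genEigenspace_of_comm (hf i) μ 1
  have htop := (hρ.eq_bot_or_eq_top _ hinv).resolve_left hμ
  exact ⟨μ, LinearMap.ext fun v =>
    End.mem_eigenspace_iff.mp (htop ▸ Submodule.mem_top)⟩

theorem IsIrreducibleFamily.units_smul {K : Type*} [CommRing K] [Module K V] {ρ : ι → End K V}
    (hρ : IsIrreducibleFamily ρ) (χ : ι → Kˣ) : IsIrreducibleFamily fun i => χ i • ρ i where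
  nontrivial := hρ.nontrivial
  eq_bot_or_eq_top := by simpa only [End.invtSubmodule_smul] using hρ.eq_bot_or_eq_top

/-- The average of a linear map over the index set, without the factor `1 / |ι|`. It intertwines two
projective representations of a finite group with the same multiplier. -/
noncomputable def intertwiningAverage [Fintype ι] (ρ₁ : ι → End R V₁) (ρ₂ : ι → End R V₂)
    (S : V₁ →ₗ[R] V₂) : V₁ →ₗ[R] V₂ :=
  ∑ i, ρ₂ i ∘ₗ S ∘ₗ (ρ₁ i)⁻¹ʳ

theorem intertwiningAverage_apply [Fintype ι] (ρ₁ : ι → End R V₁) (ρ₂ : ι → End R V₂)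
    (S : V₁ →ₗ[R] V₂) (v : V₁) :
    intertwiningAverage ρ₁ ρ₂ S v = ∑ i, ρ₂ i (S ((ρ₁ i)⁻¹ʳ v)) := by
  simp [intertwiningAverage]

end Family

section ProjectiveRep

variable {G K V V₁ V₂ : Type*} [AddCommGroup G] [Field K] [AddCommGroup V] [Module K V]
  [AddCommGroup V₁] [Module K V₁] [AddCommGroup V₂] [Module K V₂]
  {α : G → G → Kˣ} {ρ : G → End K V} {ρ₁ : G → End K V₁} {ρ₂ : G → End K V₂}

/-- Projective representations of `G` with multiplier `α`, on a vector space over `K`. -/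
structure IsProjectiveRep (α : G → G → Kˣ) (ρ : G → End K V) : Prop where
  map_zero : ρ 0 = 1
  map_mul : ∀ g h, ρ g * ρ h = α g h • ρ (g + h)

namespace IsProjectiveRep

theorem isUnit (hρ : IsProjectiveRep α ρ) (g : G) : IsUnit (ρ g) := by
  refine isUnit_iff_exists_and_exists.mpr
    ⟨⟨(α g (-g))⁻¹ • ρ (-g), ?_⟩, ⟨(α (-g) g)⁻¹ • ρ (-g), ?_⟩⟩
  · rw [mul_smul_comm, hρ.map_mul, add_neg_cancel, hρ.map_zero, inv_smul_smul]
  · rw [smul_mul_assoc, hρ.map_mul, neg_add_cancel, hρ.map_zero, inv_smul_smul]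

theorem mul_eq_commutatorPairing_smul (hρ : IsProjectiveRep α ρ) (g h : G) :
    ρ g * ρ h = commutatorPairing α g h • (ρ h * ρ g) := by
  rw [hρ.map_mul, hρ.map_mul, add_comm h g, smul_smul, commutatorPairing, div_mul_cancel]

theorem commute_of_symm (hρ : IsProjectiveRep α ρ) {g h : G} (hgh : α g h = α h g) :
    Commute (ρ g) (ρ h) := by
  rw [Commute, SemiconjBy, hρ.map_mul, hρ.map_mul, hgh, add_comm]

theorem linearIndependent [Nontrivial V] (hα : IsNormalizedTwoCocycle α)
    (hnd : IsNondegenerateCocycle α) (hρ : IsProjectiveRep α ρ) : LinearIndependent K ρ := by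
  have hchar : LinearIndependent K fun (g : G) (h : Multiplicative G) =>
      (commutatorChar hα g h : K) :=
    (linearIndependent_monoidHom (Multiplicative G) K).comp
      (fun g => (Units.coeHom K).comp (commutatorChar hα g)) fun g g' h =>
        commutatorChar_injective hα hnd (MonoidHom.ext fun x => Units.ext (DFunLike.congr_fun h x))
  rw [linearIndependent_iff'] at hchar ⊢
  intro s a hsum g hg
  have hconj : ∀ h, ∑ g ∈ s, a g • commutatorPairing α h g • ρ g = 0 := by
    intro h
    apply (hρ.isUnit h).mul_right_cancel
    calc (∑ g ∈ s, a g • commutatorPairing α h g • ρ g) * ρ h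
        = ρ h * ∑ g ∈ s, a g • ρ g := by
          simp only [Finset.sum_mul, Finset.mul_sum, smul_mul_assoc, mul_smul_comm,
            hρ.mul_eq_commutatorPairing_smul h]
      _ = 0 * ρ h := by rw [hsum, mul_zero, zero_mul]
  obtain ⟨f, hf⟩ : ∃ f : Dual K (End K V), f (ρ g) ≠ 0 := by
    by_contra! hf
    exact (hρ.isUnit g).ne_zero ((forall_dual_apply_eq_zero_iff K _).mp hf)
  refine (mul_eq_zero.mp (hchar s (fun g => a g * f (ρ g)) (funext fun h => ?_) g hg)).resolve_right
    hf
  simpa [Units.smul_def, commutatorChar, mul_assoc, mul_comm, mul_left_comm] using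
    congrArg f (hconj h.toAdd)

theorem inverse_add_mul (hρ : IsProjectiveRep α ρ) (g h : G) :
    (ρ (g + h))⁻¹ʳ * ρ g = α g h • (ρ h)⁻¹ʳ := by
  calc (ρ (g + h))⁻¹ʳ * ρ g = (ρ (g + h))⁻¹ʳ * (ρ g * ρ h) * (ρ h)⁻¹ʳ := by
        rw [← mul_assoc, Ring.mul_inverse_cancel_right _ _ (hρ.isUnit h)]
    _ = α g h • (ρ h)⁻¹ʳ := by
        rw [hρ.map_mul, mul_smul_comm, Ring.inverse_mul_cancel _ (hρ.isUnit _), smul_mul_assoc,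
          one_mul]

theorem intertwiningAverage_comm [Fintype G] (h₁ : IsProjectiveRep α ρ₁)
    (h₂ : IsProjectiveRep α ρ₂) (S : V₁ →ₗ[K] V₂) (g : G) (v : V₁) :
    intertwiningAverage ρ₁ ρ₂ S (ρ₁ g v) = ρ₂ g (intertwiningAverage ρ₁ ρ₂ S v) := by
  simp only [intertwiningAverage_apply, map_sum]
  rw [← Equiv.sum_comp (Equiv.addLeft g)]
  refine Finset.sum_congr rfl fun h _ => ?_
  have hinv := LinearMap.congr_fun (h₁.inverse_add_mul g h) v
  have hmul := LinearMap.congr_fun (h₂.map_mul g h) (S ((ρ₁ h)⁻¹ʳ v))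
  rw [End.mul_apply] at hinv hmul
  rw [Equiv.coe_addLeft, hinv, hmul]
  simp only [LinearMap.smul_apply, Units.smul_def, map_smul]

theorem exists_intertwiningAverage_ne_zero [Fintype G] [Nontrivial V₁] [Nontrivial V₂]
    (hα : IsNormalizedTwoCocycle α) (hnd : IsNondegenerateCocycle α) (h₁ : IsProjectiveRep α ρ₁)
    (h₂ : IsProjectiveRep α ρ₂) : ∃ S, intertwiningAverage ρ₁ ρ₂ S ≠ 0 := by
  by_contra! hzero
  obtain ⟨v, hv⟩ := exists_ne (0 : V₁)
  refine hv ((forall_dual_apply_eq_zero_iff K v).mp fun f => ?_)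
  have hsum : ∑ g, f ((ρ₁ g)⁻¹ʳ v) • ρ₂ g = 0 := by
    ext w
    simpa [intertwiningAverage_apply] using LinearMap.congr_fun (hzero (f.smulRight w)) v
  have hcoeff := Fintype.linearIndependent_iff.mp (h₂.linearIndependent hα hnd) _ hsum 0
  simpa [h₁.map_zero] using hcoeff

theorem linearlyEquivalent [Finite G] (hα : IsNormalizedTwoCocycle α)
    (hnd : IsNondegenerateCocycle α) (h₁ : IsProjectiveRep α ρ₁) (i₁ : IsIrreducibleFamily ρ₁)
    (h₂ : IsProjectiveRep α ρ₂) (i₂ : IsIrreducibleFamily ρ₂) : LinearlyEquivalent ρ₁ ρ₂ := by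
  have := Fintype.ofFinite G
  have := i₁.nontrivial
  have := i₂.nontrivial
  obtain ⟨S, hS⟩ := exists_intertwiningAverage_ne_zero hα hnd h₁ h₂
  have hcomm := h₁.intertwiningAverage_comm h₂ S
  exact ⟨.ofBijective _ (i₁.bijective_of_intertwining i₂ hcomm hS), hcomm⟩

theorem restrict (hρ : IsProjectiveRep α ρ) {W : Submodule K V}
    (hW : ∀ g, W ∈ (ρ g).invtSubmodule) :
    IsProjectiveRep α fun g => (ρ g).restrict (hW g) where
  map_zero := LinearMap.ext fun w => Subtype.ext (LinearMap.congr_fun hρ.map_zero w)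
  map_mul g h := LinearMap.ext fun w => Subtype.ext (LinearMap.congr_fun (hρ.map_mul g h) w)

theorem twist (hρ : IsProjectiveRep α ρ) (χ : AddChar G Kˣ) :
    IsProjectiveRep α fun g => χ g • ρ g where
  map_zero := by rw [AddChar.map_zero_eq_one, one_smul, hρ.map_zero]
  map_mul g h := by
    rw [smul_mul_smul_comm, hρ.map_mul, AddChar.map_add_eq_mul, smul_smul, smul_smul, mul_comm]

end IsProjectiveRep

/-- The twisted regular representation, in which `g` sends the indicator function of `x` to `α g x`
times that of `g + x`. -/
def twistedRegular (α : G → G → Kˣ) (g : G) : End K (G → K) :=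
  LinearMap.pi fun x => α g (x - g) • LinearMap.proj (x - g)

theorem isProjectiveRep_twistedRegular (hα : IsNormalizedTwoCocycle α) :
    IsProjectiveRep α (twistedRegular α) where
  map_zero := by
    ext f x
    simp [twistedRegular, hα.zero_left]
  map_mul g h := by
    refine LinearMap.ext fun f => funext fun x => ?_
    have hcocycle := hα.cocycle g h (x - (g + h))
    rw [show h + (x - (g + h)) = x - g by abel] at hcocycle
    calc α g (x - g) • α h (x - g - h) • f (x - g - h)
        = (α h (x - (g + h)) * α g (x - g)) • f (x - (g + h)) := by
          rw [sub_sub, smul_smul, mul_comm]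
      _ = α g h • α (g + h) (x - (g + h)) • f (x - (g + h)) := by rw [← hcocycle, mul_smul]

end ProjectiveRep

section CentralType

variable {G : Type u} {K : Type v} [AddCommGroup G] [Field K]

/-- `G` is of `α`-central type: all finite-dimensional irreducible projective `α`-representations
are linearly equivalent. The universe of the spaces is that of the functions `G → K`, so that the
twisted regular representation is among them. -/
def IsCentralType (α : G → G → Kˣ) : Prop :=
  ∀ (V₁ V₂ : Type max u v) [AddCommGroup V₁] [Module K V₁] [FiniteDimensional K V₁]
    [AddCommGroup V₂] [Module K V₂] [FiniteDimensional K V₂]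
    (ρ₁ : G → End K V₁) (ρ₂ : G → End K V₂),
    IsProjectiveRep α ρ₁ → IsIrreducibleFamily ρ₁ →
    IsProjectiveRep α ρ₂ → IsIrreducibleFamily ρ₂ → LinearlyEquivalent ρ₁ ρ₂

variable {α : G → G → Kˣ}

theorem isCentralType_iff_forall_image_subset :
    IsCentralType α ↔
      ∀ (V₁ : Type max u v) [AddCommGroup V₁] [Module K V₁] [FiniteDimensional K V₁]
        [Nontrivial V₁] (V₂ : Type max u v) [AddCommGroup V₂] [Module K V₂] [FiniteDimensional K V₂]
        [Nontrivial V₂] (ρ₁ : G → V₁ →ₗ[K] V₁) (ρ₂ : G → V₂ →ₗ[K] V₂),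
        ρ₁ 0 = LinearMap.id →
        (∀ g h, ρ₁ g ∘ₗ ρ₁ h = (α g h : K) • ρ₁ (g + h)) →
        (∀ W : Submodule K V₁, (∀ g, ρ₁ g '' (W : Set V₁) ⊆ W) → W = ⊥ ∨ W = ⊤) →
        ρ₂ 0 = LinearMap.id →
        (∀ g h, ρ₂ g ∘ₗ ρ₂ h = (α g h : K) • ρ₂ (g + h)) →
        (∀ W : Submodule K V₂, (∀ g, ρ₂ g '' (W : Set V₂) ⊆ W) → W = ⊥ ∨ W = ⊤) →
        LinearlyEquivalent ρ₁ ρ₂ := by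
  simp only [Set.image_subset_iff]
  refine ⟨fun H V₁ _ _ _ _ V₂ _ _ _ _ ρ₁ ρ₂ z₁ m₁ i₁ z₂ m₂ i₂ =>
    H V₁ V₂ ρ₁ ρ₂ ⟨z₁, m₁⟩ ⟨‹_›, i₁⟩ ⟨z₂, m₂⟩ ⟨‹_›, i₂⟩,
    fun H V₁ V₂ _ _ _ _ _ _ ρ₁ ρ₂ h₁ i₁ h₂ i₂ => ?_⟩
  have := i₁.nontrivial
  have := i₂.nontrivial
  exact H V₁ V₂ ρ₁ ρ₂ h₁.map_zero h₁.map_mul i₁.eq_bot_or_eq_top h₂.map_zero h₂.map_mul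
    i₂.eq_bot_or_eq_top

variable [Finite G]

theorem exists_irreducible_projectiveRep (hα : IsNormalizedTwoCocycle α) :
    ∃ (V : Submodule K (G → K)) (ρ : G → End K V),
      IsProjectiveRep α ρ ∧ IsIrreducibleFamily ρ := by
  obtain ⟨W, hW, hirr⟩ := exists_isIrreducibleFamily_restrict (twistedRegular α)
  exact ⟨W, _, (isProjectiveRep_twistedRegular hα).restrict hW, hirr⟩

theorem IsCentralType.char_eq_one [IsAlgClosed K] (hct : IsCentralType α)
    (hα : IsNormalizedTwoCocycle α) {x : G} (hx : ∀ h, α x h = α h x) (χ : AddChar G Kˣ) :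
    χ x = 1 := by
  obtain ⟨V, ρ, hρ, hirr⟩ := exists_irreducible_projectiveRep hα
  have := hirr.nontrivial
  obtain ⟨T, hT⟩ := hct V V ρ _ hρ hirr (hρ.twist χ) (hirr.units_smul χ)
  obtain ⟨μ, hμ⟩ := hirr.exists_eq_smul_one fun h => hρ.commute_of_symm (hx h)
  obtain ⟨v, hv⟩ := exists_ne (0 : V)
  have hfix : ρ x (T v) = (χ x : K) • ρ x (T v) := by
    rw [← LinearMap.smul_apply, ← Units.smul_def, ← hT, hμ]
    simp
  have hne : ρ x (T v) ≠ 0 := by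
    have hinj := ((End.isUnit_iff _).mp (hρ.isUnit x)).injective
    simpa [map_eq_zero_iff _ hinj] using hv
  exact Units.ext (smul_left_injective K hne (by simpa using hfix.symm))

theorem exists_addChar_apply_ne_one [IsSepClosed K] [NeZero (Nat.card G : K)] {x : G} (hx : x ≠ 0) :
    ∃ χ : AddChar G Kˣ, χ x ≠ 1 := by
  have : NeZero (Nat.card G) := .of_neZero_natCast K
  have : HasEnoughRootsOfUnity K (Nat.card (Multiplicative G)) :=
    inferInstanceAs (HasEnoughRootsOfUnity K (Nat.card G))
  have : HasEnoughRootsOfUnity K (Monoid.exponent (Multiplicative G)) :=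
    .of_dvd K (Group.exponent_dvd_nat_card (G := Multiplicative G))
  obtain ⟨φ, hφ⟩ := CommGroup.exists_apply_ne_one_of_hasEnoughRootsOfUnity (Multiplicative G) K
    (a := .ofAdd x) (by simpa using hx)
  exact ⟨AddChar.toMonoidHomEquiv.symm φ, hφ⟩

theorem isCentralType_iff_isNondegenerateCocycle [IsAlgClosed K] [NeZero (Nat.card G : K)]
    (hα : IsNormalizedTwoCocycle α) : IsCentralType α ↔ IsNondegenerateCocycle α := by
  refine ⟨fun hct x hx => ?_, fun hnd V₁ V₂ _ _ _ _ _ _ ρ₁ ρ₂ h₁ i₁ h₂ i₂ =>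
    h₁.linearlyEquivalent hα hnd i₁ h₂ i₂⟩
  by_contra hne
  obtain ⟨χ, hχ⟩ := exists_addChar_apply_ne_one (K := K) hne
  exact hχ (hct.char_eq_one hα hx χ)

end CentralType

section Matrix

variable {ι κ F : Type*} [Fintype κ] [Field F]

theorem injective_vecMul_iff_rank_eq_card [Fintype ι] (c : Matrix ι κ F) :
    Injective c.vecMul ↔ c.rank = Fintype.card ι := by
  rw [Matrix.rank_eq_finrank_span_row, eq_comm]
  exact Matrix.vecMul_injective_iff.trans linearIndependent_iff_card_eq_finrank_span

theorem injective_mulVec_iff_rank_eq_card [Finite ι] (c : Matrix ι κ F) :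
    Injective c.mulVec ↔ c.rank = Fintype.card κ := by
  have := Fintype.ofFinite ι
  rw [← c.rank_transpose, ← injective_vecMul_iff_rank_eq_card]
  simp only [c.vecMul_transpose]

end Matrix

section Reduction

variable {ι : Type*} {p : ℕ} {n : ι → ℕ}

theorem castHom_injective_iff {m n : ℕ} [NeZero m] (h : n ∣ m) :
    Injective (ZMod.castHom h (ZMod n)) ↔ m = n := by
  have : NeZero n := ⟨ne_zero_of_dvd_ne_zero (NeZero.ne m) h⟩
  constructor
  · intro hinj
    simpa only [ZMod.card] using Fintype.card_of_bijective ⟨hinj, ZMod.castHom_surjective h⟩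
  · rintro rfl
    exact ZMod.castHom_injective _

/-- The componentwise reduction mod `p`. -/
def piReduction (p : ℕ) (h : ∀ i, p ∣ n i) : (∀ i, ZMod (n i)) →+ (ι → ZMod p) :=
  AddMonoidHom.piMap fun i => (ZMod.castHom (h i) (ZMod p)).toAddMonoidHom

theorem piReduction_surjective (h : ∀ i, p ∣ n i) : Surjective (piReduction p h) :=
  Surjective.piMap fun i => ZMod.castHom_surjective (h i)

theorem piReduction_injective_iff [∀ i, NeZero (n i)] (h : ∀ i, p ∣ n i) :
    Injective (piReduction p h) ↔ ∀ i, n i = p :=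
  Pi.map_injective.trans (forall_congr' fun i => castHom_injective_iff (h i))

end Reduction

section MatrixCocycle

variable {ι κ M A : Type*} [Fintype ι] [Fintype κ] [AddCommGroup M] [CommGroup A] {p : ℕ}

/-- The 2-cocycle `((m, k), (m', k')) ↦ ξ ^ ⟨q m', c k⟩` on `M × (ZMod p)^κ`. -/
def matrixCocycle (q : M →+ (ι → ZMod p)) (c : Matrix ι κ (ZMod p)) (ξ : A)
    (g h : M × (κ → ZMod p)) : A :=
  ξ ^ (q h.1 ⬝ᵥ c *ᵥ g.2).val

variable {q : M →+ (ι → ZMod p)} {c : Matrix ι κ (ZMod p)} {ξ : A}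

theorem isNormalizedTwoCocycle_matrixCocycle [NeZero p] (hξ : ξ ^ p = 1) :
    IsNormalizedTwoCocycle (matrixCocycle q c ξ) := by
  refine isNormalizedTwoCocycle_of_map_add (fun g g' h => ?_) (fun g h h' => ?_)
  all_goals simp only [matrixCocycle, ← AddChar.zmodChar_apply hξ, Prod.fst_add, Prod.snd_add,
    map_add, Matrix.mulVec_add, add_dotProduct, dotProduct_add, AddChar.map_add_eq_mul]

theorem matrixCocycle_symm_iff [NeZero p] (hξ : IsPrimitiveRoot ξ p) (hq : Surjective q)
    (g : M × (κ → ZMod p)) :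
    (∀ h, matrixCocycle q c ξ g h = matrixCocycle q c ξ h g) ↔
      c *ᵥ g.2 = 0 ∧ q g.1 ᵥ* c = 0 := by
  have hpow (a b : ZMod p) : ξ ^ a.val = ξ ^ b.val ↔ a = b :=
    ⟨fun h => ZMod.val_injective p (hξ.pow_inj a.val_lt b.val_lt h), fun h => h ▸ rfl⟩
  simp only [matrixCocycle, hpow, Prod.forall, Matrix.dotProduct_mulVec (q g.1)]
  constructor
  · intro h
    constructor
    · refine dotProduct_eq_zero _ fun w => ?_
      obtain ⟨m, rfl⟩ := hq w
      simpa [dotProduct_comm] using h m 0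
    · exact dotProduct_eq_zero _ fun k => by simpa using (h 0 k).symm
  · rintro ⟨hc, hqc⟩ m k
    rw [hc, hqc, dotProduct_zero, zero_dotProduct]

theorem isNondegenerateCocycle_matrixCocycle_iff [NeZero p] (hξ : IsPrimitiveRoot ξ p)
    (hq : Surjective q) :
    IsNondegenerateCocycle (matrixCocycle q c ξ) ↔
      Injective c.mulVec ∧ Injective q ∧ Injective c.vecMul := by
  have hmulVec : Injective c.mulVec ↔ ∀ k, c *ᵥ k = 0 → k = 0 :=
    injective_iff_map_eq_zero c.mulVecLin
  have hvecMul : Injective q ∧ Injective c.vecMul ↔ ∀ m, q m ᵥ* c = 0 → m = 0 := by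
    have hcomp : Injective q ∧ Injective c.vecMul ↔ Injective (c.vecMul ∘ q) :=
      ⟨fun h => h.2.comp h.1, fun h => ⟨h.of_comp, h.of_comp_right hq⟩⟩
    exact hcomp.trans (injective_iff_map_eq_zero (c.vecMulLinear.toAddMonoidHom.comp q))
  rw [hmulVec, hvecMul]
  simp only [IsNondegenerateCocycle, matrixCocycle_symm_iff hξ hq, Prod.forall, Prod.mk_eq_zero]
  exact ⟨fun h => ⟨fun k hk => (h 0 k ⟨hk, by simp⟩).2, fun m hm => (h m 0 ⟨by simp, hm⟩).1⟩,
    fun h m k hmk => ⟨h.2 m hmk.2, h.1 k hmk.1⟩⟩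

theorem alpha_central_type_iff_general {K : Type*} [Field K] [IsAlgClosed K] [Fact p.Prime]
    (r : ι → ℕ) (hr : ∀ i, r i ≠ 0) (c : Matrix ι κ (ZMod p)) {ξ : Kˣ}
    (hξ : IsPrimitiveRoot ξ p) :
    IsCentralType (matrixCocycle (piReduction p fun i => dvd_pow_self p (hr i)) c ξ) ↔
      Fintype.card κ = Fintype.card ι ∧ (∀ i, r i = 1) ∧ c.rank = Fintype.card ι := by
  have hp : (p : K) ≠ 0 := (IsPrimitiveRoot.coe_units_iff.mpr hξ).neZero'.ne
  have hcard : NeZero (Nat.card ((∀ i, ZMod (p ^ r i)) × (κ → ZMod p)) : K) := ⟨by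
    simp [Nat.card_prod, Nat.card_pi, Finset.prod_ne_zero_iff, hp]⟩
  rw [isCentralType_iff_isNondegenerateCocycle (isNormalizedTwoCocycle_matrixCocycle hξ.pow_eq_one),
    isNondegenerateCocycle_matrixCocycle_iff hξ (piReduction_surjective _),
    piReduction_injective_iff, injective_mulVec_iff_rank_eq_card,
    injective_vecMul_iff_rank_eq_card]
  simp only [Nat.pow_eq_self_iff (Fact.out : p.Prime).two_le]
  grind

theorem bilinAlpha_eq_matrixCocycle {t s : ℕ} (r : Fin t → ℕ) (hr : ∀ i, 1 ≤ r i)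
    (c : Matrix (Fin t) (Fin s) (ZMod p)) (ξ : ℂˣ) :
    bilinAlpha p r hr c ξ = matrixCocycle
      (piReduction p fun i => dvd_pow_self p (Nat.one_le_iff_ne_zero.mp (hr i))) c ξ := by
  funext g h
  simp only [bilinAlpha, matrixCocycle, dotProduct, Matrix.mulVec, Finset.mul_sum, mul_assoc,
    mul_left_comm (c _ _)]
  rfl

end MatrixCocycle

theorem alpha_central_type_iff (p t s : ℕ) (hp : p.Prime) (ht : 1 ≤ t) (hs : 1 ≤ s)
    (r : Fin t → ℕ) (hr : ∀ i, 1 ≤ r i)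
    (c : Matrix (Fin t) (Fin s) (ZMod p)) (ξ : ℂˣ) (hξ : IsPrimitiveRoot ξ p) :
    (∀ (V₁ : Type) [AddCommGroup V₁] [Module ℂ V₁] [FiniteDimensional ℂ V₁] [Nontrivial V₁]
        (V₂ : Type) [AddCommGroup V₂] [Module ℂ V₂] [FiniteDimensional ℂ V₂] [Nontrivial V₂]
        (ρ₁ : ((∀ i : Fin t, ZMod (p ^ r i)) × (Fin s → ZMod p)) → (V₁ →ₗ[ℂ] V₁))
        (ρ₂ : ((∀ i : Fin t, ZMod (p ^ r i)) × (Fin s → ZMod p)) → (V₂ →ₗ[ℂ] V₂)),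
        ρ₁ 0 = LinearMap.id →
        (∀ g h, ρ₁ g ∘ₗ ρ₁ h = (bilinAlpha p r hr c ξ g h : ℂ) • ρ₁ (g + h)) →
        (∀ W : Submodule ℂ V₁, (∀ g, (ρ₁ g) '' (W : Set V₁) ⊆ (W : Set V₁)) → W = ⊥ ∨ W = ⊤) →
        ρ₂ 0 = LinearMap.id →
        (∀ g h, ρ₂ g ∘ₗ ρ₂ h = (bilinAlpha p r hr c ξ g h : ℂ) • ρ₂ (g + h)) →
        (∀ W : Submodule ℂ V₂, (∀ g, (ρ₂ g) '' (W : Set V₂) ⊆ (W : Set V₂)) → W = ⊥ ∨ W = ⊤) →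
        ∃ T : V₁ ≃ₗ[ℂ] V₂, ∀ g v, T (ρ₁ g v) = ρ₂ g (T v)) ↔
      (s = t ∧ (∀ i, r i = 1) ∧ c.rank = t) := by
  have := Fact.mk hp
  refine isCentralType_iff_forall_image_subset.symm.trans ?_
  simpa only [bilinAlpha_eq_matrixCocycle, Fintype.card_fin] using
    alpha_central_type_iff_general r (fun i => Nat.one_le_iff_ne_zero.mp (hr i)) c hξ
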